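/- Stepwise decomposition of the optimal discounted reward: suppose batteries are lossless, c i ≥ B i for all i, and 0 < γ < 1. Fix a net-generation sequence e : ℕ → ℤ and an initial total T₀ with 0 ≤ T₀ ≤ ∑ i, B i, and define T (k+1) = clamp (T k + e k) 0 (∑ i, B i), T 0 = T₀. Let R* k denote the maximum of R b a over all occupancy vectors b with ∑ i, b i = T k and actions a feasible at b for e k. Then for every feasible trajectory b with ∑ i, b 0 i = T₀, ∑' k, γ^k * R (b k) (b (k+1) - b k) ≤ ∑' k, γ^k * R* k, and there exists a feasible trajectory attaining equality (any trajectory whose action at each step maximizes the instantaneous reward). -/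

import Mathlib

/-!
The reward `Rwd b a` depends on `b` and `a` only through the next occupancy `b + a`, while
feasibility of `a` at `b` fixes the next total `∑ i, (b + a) i` as a function of `∑ i, b i`
(`sum_add_of_feas`) and otherwise only asks that `b + a` be an occupancy vector. Hence with lossless
batteries and no ramp constraint every occupancy vector of total `T (k + 1)` is reachable in one step
from every occupancy vector of total `T k`: the stepwise maximizers can be strung together into one
trajectory, whatever state each maximizer was originally taken from. In the other direction, any
feasible trajectory has total `T k` at time `k`, so its `k`-th reward is at most `R* k`. The rewards
are uniformly bounded (`abs_Rwd_le`), so both discounted series converge and compare termwise.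
-/

/-- `clamp y m M` projects `y` onto the interval `[m, M]`. -/
def clamp (y m M : ℤ) : ℤ := min (max y m) M

/-- An action `a` is feasible at occupancy `b` for net generation `e`
(lossless batteries, no binding ramp constraints). -/
def FeasNR (N : ℕ) (B : Fin N → ℤ) (e : ℤ) (b a : Fin N → ℤ) : Prop :=
  (∀ i, 0 ≤ b i + a i ∧ b i + a i ≤ B i) ∧
    ∑ i, a i = clamp e (-∑ i, b i) (∑ i, (B i - b i))

/-- A feasible trajectory for the net-generation sequence `e`. -/
def FeasTrajNR (N : ℕ) (B : Fin N → ℤ) (e : ℕ → ℤ) (b : ℕ → Fin N → ℤ) : Prop :=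
  ∀ k, (∀ i, 0 ≤ b k i ∧ b k i ≤ B i) ∧
    FeasNR N B (e k) (b k) (b (k + 1) - b k)

/-- The cycling-cost reward of action `a` at occupancy `b`. -/
noncomputable def Rwd (N : ℕ) (r : Fin N → ℝ) (θlo θhi : Fin N → ℤ)
    (b a : Fin N → ℤ) : ℝ :=
  -∑ i, r i * (max (((θlo i - (b i + a i) : ℤ) : ℝ)) 0 +
               max ((((b i + a i) - θhi i : ℤ) : ℝ)) 0)

/-- Translation of the clamp: the total after a feasible action is the total before it plus the net
generation, clamped to the total capacity range. -/
lemma sum_add_of_feas {N : ℕ} {B : Fin N → ℤ} {e : ℤ} {b a : Fin N → ℤ}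
    (h : FeasNR N B e b a) :
    ∑ i, (b i + a i) = clamp (∑ i, b i + e) 0 (∑ i, B i) := by
  have h2 := h.2
  rw [Finset.sum_sub_distrib] at h2
  rw [Finset.sum_add_distrib, h2]
  unfold clamp
  omega

/-- Converse of `sum_add_of_feas`: moving to any occupancy vector `b'` with the right total is
feasible. -/
lemma feas_sub {N : ℕ} {B : Fin N → ℤ} {e : ℤ} {b b' : Fin N → ℤ}
    (hb' : ∀ i, 0 ≤ b' i ∧ b' i ≤ B i)
    (h : ∑ i, b' i = clamp (∑ i, b i + e) 0 (∑ i, B i)) :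
    FeasNR N B e b (b' - b) := by
  refine ⟨fun i => by simpa using hb' i, ?_⟩
  simp only [Pi.sub_apply]
  rw [Finset.sum_sub_distrib, Finset.sum_sub_distrib, h]
  unfold clamp
  omega

lemma Rwd_congr {N : ℕ} {r : Fin N → ℝ} {θlo θhi b a b' a' : Fin N → ℤ}
    (h : ∀ i, b i + a i = b' i + a' i) :
    Rwd N r θlo θhi b a = Rwd N r θlo θhi b' a' := by
  simp only [Rwd, h]

lemma abs_Rwd_le {N : ℕ} {B : Fin N → ℤ} {e : ℤ} {r : Fin N → ℝ} (hr : ∀ i, 0 ≤ r i)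
    {θlo θhi b a : Fin N → ℤ} (hθ : ∀ i, 0 ≤ θlo i ∧ θlo i ≤ θhi i ∧ θhi i ≤ B i)
    (h : FeasNR N B e b a) :
    |Rwd N r θlo θhi b a| ≤ ∑ i, r i * (B i + B i) := by
  rw [Rwd, abs_neg, abs_of_nonneg]
  · refine Finset.sum_le_sum fun i _ => mul_le_mul_of_nonneg_left ?_ (hr i)
    have h1 := h.1 i
    have h2 := hθ i
    refine add_le_add (max_le ?_ ?_) (max_le ?_ ?_) <;> norm_cast <;> omega
  · exact Finset.sum_nonneg fun i _ => mul_nonneg (hr i) (by positivity)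

lemma summable_discounted {γ C : ℝ} (hγ₀ : 0 < γ) (hγ₁ : γ < 1) {f : ℕ → ℝ}
    (hf : ∀ k, |f k| ≤ C) : Summable fun k => γ ^ k * f k := by
  refine Summable.of_norm_bounded ((summable_geometric_of_lt_one hγ₀.le hγ₁).mul_right C) ?_
  intro k
  rw [Real.norm_eq_abs, abs_mul, abs_of_pos (pow_pos hγ₀ k)]
  exact mul_le_mul_of_nonneg_left (hf k) (pow_pos hγ₀ k).le

/-- Stepwise decomposition of the optimal discounted reward: with `T` the
deterministic total-energy sequence and `R* k` the maximal instantaneous reward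
achievable at step `k` over all occupancy vectors with total `T k`, every
feasible trajectory earns at most `∑' k, γ^k * R* k`, and some feasible
trajectory (one whose action at each step maximizes the instantaneous reward)
attains this bound. -/
theorem stepwise_decomposition (N : ℕ) (B : Fin N → ℤ) (hB : ∀ i, 0 ≤ B i)
    (r : Fin N → ℝ) (hr : ∀ i, 0 ≤ r i)
    (θlo θhi : Fin N → ℤ)
    (hθ : ∀ i, 0 ≤ θlo i ∧ θlo i ≤ θhi i ∧ θhi i ≤ B i)
    (γ : ℝ) (hγ₀ : 0 < γ) (hγ₁ : γ < 1)
    (e : ℕ → ℤ) (T₀ : ℤ) (hT₀ : 0 ≤ T₀ ∧ T₀ ≤ ∑ i, B i)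
    (T : ℕ → ℤ) (hT0 : T 0 = T₀)
    (hTs : ∀ k, T (k + 1) = clamp (T k + e k) 0 (∑ i, B i))
    (Rstar : ℕ → ℝ)
    (hRstar : ∀ k, IsGreatest
      {x : ℝ | ∃ b a : Fin N → ℤ, (∀ i, 0 ≤ b i ∧ b i ≤ B i) ∧
        (∑ i, b i = T k) ∧ FeasNR N B (e k) b a ∧ x = Rwd N r θlo θhi b a}
      (Rstar k)) :
    (∀ b : ℕ → Fin N → ℤ, FeasTrajNR N B e b → ∑ i, b 0 i = T₀ →
      (∑' k, γ ^ k * Rwd N r θlo θhi (b k) (b (k + 1) - b k)) ≤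
        ∑' k, γ ^ k * Rstar k) ∧
    ∃ bstar : ℕ → Fin N → ℤ, FeasTrajNR N B e bstar ∧ ∑ i, bstar 0 i = T₀ ∧
      (∀ k, Rwd N r θlo θhi (bstar k) (bstar (k + 1) - bstar k) = Rstar k) ∧
      (∑' k, γ ^ k * Rwd N r θlo θhi (bstar k) (bstar (k + 1) - bstar k)) =
        ∑' k, γ ^ k * Rstar k := by
  choose bb aa hbb hsum hfeas hR using fun k => (hRstar k).1
  refine ⟨fun b hb hb0 => ?_, ?_⟩
  · have hT : ∀ k, ∑ i, b k i = T k := by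
      intro k
      induction k with
      | zero => rw [hb0, hT0]
      | succ k ih =>
        rw [hTs, ← ih, ← sum_add_of_feas (hb k).2]
        simp
    refine Summable.tsum_le_tsum (fun k => mul_le_mul_of_nonneg_left ?_ (pow_pos hγ₀ k).le)
      (summable_discounted hγ₀ hγ₁ fun k => abs_Rwd_le hr hθ (hb k).2)
      (summable_discounted hγ₀ hγ₁ fun k => by rw [hR k]; exact abs_Rwd_le hr hθ (hfeas k))
    exact (hRstar k).2 ⟨b k, _, (hb k).1, hT k, (hb k).2, rfl⟩
  · -- The state at time `k + 1` is the successor state of the `k`-th maximizer `(bb k, aa k)`;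
    -- `bb k` itself is discarded except at time `0`.
    let bs : ℕ → Fin N → ℤ := fun n => Nat.casesOn n (bb 0) fun k => bb k + aa k
    have hocc : ∀ k i, 0 ≤ bs k i ∧ bs k i ≤ B i := by
      intro k
      cases k with
      | zero => exact hbb 0
      | succ k => exact (hfeas k).1
    have hT : ∀ k, ∑ i, bs k i = T k := by
      intro k
      cases k with
      | zero => exact hsum 0
      | succ k =>
        rw [hTs, ← hsum k]
        exact sum_add_of_feas (hfeas k)
    have hrew : ∀ k, Rwd N r θlo θhi (bs k) (bs (k + 1) - bs k) = Rstar k := by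
      intro k
      rw [hR k]
      refine Rwd_congr fun i => ?_
      rw [Pi.sub_apply, add_sub_cancel]
      rfl
    refine ⟨bs, fun k => ⟨hocc k, feas_sub (hocc (k + 1)) ?_⟩, (hT 0).trans hT0, hrew, ?_⟩
    · rw [hT k, ← hTs]
      exact hT (k + 1)
    · simp only [hrew]
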